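/- Let T be a tree on n vertices with maximum degree Δ, where 2 < Δ < n − 1. Then T ⪯ CP_{n;1,Δ−1}, and r(T) = r(CP_{n;1,Δ−1}) if and only if T is isomorphic to CP_{n;1,Δ−1}. -/

import Mathlib

namespace TreeOrder

attribute [local instance] Classical.propDecidable

variable {V : Type*} {W : Type*}

/-- `side G u v` = number of vertices strictly closer to `u` than to `v`;
for an edge `uv` of a tree this is the order of the component of `T - uv` containing `u`. -/
noncomputable def side [Fintype V] (G : SimpleGraph V) (u v : V) : ℕ :=
  (Finset.univ.filter fun w => G.dist w u < G.dist w v).card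

/-- `mu G u v = min (n_u(e), n_v(e))` for the edge `e = uv`. -/
noncomputable def mu [Fintype V] (G : SimpleGraph V) (u v : V) : ℕ :=
  min (side G u v) (side G v u)

/-- `mu` as a function on unordered pairs. -/
noncomputable def muE [Fintype V] (G : SimpleGraph V) : Sym2 V → ℕ :=
  Sym2.lift ⟨fun u v => mu G u v, fun _ _ => min_comm _ _⟩

/-- `r G i` = number of edges `e` of `G` with `μ(e) = i`. -/
noncomputable def r [Fintype V] (G : SimpleGraph V) (i : ℕ) : ℕ :=
  (Finset.univ.filter fun e : Sym2 V => e ∈ G.edgeSet ∧ muE G e = i).card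

/-- `tailSum G n k = Σ_{i=k}^{⌊n/2⌋} r_i(G)`. -/
noncomputable def tailSum [Fintype V] (G : SimpleGraph V) (n k : ℕ) : ℕ :=
  ∑ i ∈ Finset.Icc k (n / 2), r G i

/-- The order `⪯` on trees with `n` vertices, via edge division vectors. -/
def Preceq [Fintype V] [Fintype W] (n : ℕ) (G : SimpleGraph V) (H : SimpleGraph W) : Prop :=
  ∀ k, 1 ≤ k → k ≤ n / 2 → tailSum G n k ≤ tailSum H n k

/-- The strict order `≺`. -/
def Prec [Fintype V] [Fintype W] (n : ℕ) (G : SimpleGraph V) (H : SimpleGraph W) : Prop :=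
  Preceq n G H ∧ ∃ k, 1 ≤ k ∧ k ≤ n / 2 ∧ tailSum G n k < tailSum H n k

/-- Equality of edge division vectors `r(G) = r(H)`. -/
def SameEdgeDivision [Fintype V] [Fintype W] (n : ℕ) (G : SimpleGraph V)
    (H : SimpleGraph W) : Prop :=
  ∀ i, 1 ≤ i → i ≤ n / 2 → r G i = r H i

/-- `u` is a centroidal vertex: `n_u(e) ≥ n/2` for every edge `e` incident to `u`. -/
def IsCentroidal [Fintype V] (G : SimpleGraph V) (u : V) : Prop :=
  ∀ v, G.Adj u v → Fintype.card V ≤ 2 * side G u v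

/-- `u` is a proper centroidal vertex: `n_u(e) > ⌈n/2⌉` for every edge `e` incident to `u`. -/
def IsProperCentroidal [Fintype V] (G : SimpleGraph V) (u : V) : Prop :=
  ∀ v, G.Adj u v → (Fintype.card V + 1) / 2 < side G u v

/-- The edge `uv` is a center edge: `μ(uv) = ⌊n/2⌋`. -/
def IsCenterEdge [Fintype V] (G : SimpleGraph V) (u v : V) : Prop :=
  G.Adj u v ∧ mu G u v = Fintype.card V / 2

/-- degree of a vertex -/
noncomputable def deg [Fintype V] (G : SimpleGraph V) (v : V) : ℕ :=
  (Finset.univ.filter fun w => G.Adj v w).card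

/-- The path `P_n` on `n` vertices. -/
def pathG (n : ℕ) : SimpleGraph (Fin n) :=
  SimpleGraph.fromRel fun x y => (x : ℕ) + 1 = y

/-- The star `S_n` on `n` vertices. -/
def starG (n : ℕ) : SimpleGraph (Fin n) :=
  SimpleGraph.fromRel fun x _ => (x : ℕ) = 0

/-- The double star path `CP_{n;a,b}` : a path on `n - a - b` vertices (at positions
`a, …, n - b - 1`) with `a` pendent vertices attached to its first vertex and `b`
pendent vertices attached to its last vertex. -/
def doubleStar (n a b : ℕ) : SimpleGraph (Fin n) :=
  SimpleGraph.fromRel fun x y =>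
    ((x : ℕ) < a ∧ (y : ℕ) = a) ∨
    (a ≤ (x : ℕ) ∧ (x : ℕ) + 1 = y ∧ (y : ℕ) < n - b) ∨
    ((x : ℕ) = n - b - 1 ∧ n - b ≤ (y : ℕ))

/-- `CP_{n,k}^s` : a path `v_1 ⋯ v_k` (at positions `0, …, k-1`) with all
`n - k` pendent vertices attached to `v_s` (position `s - 1`). -/
def cpOne (n k s : ℕ) : SimpleGraph (Fin n) :=
  SimpleGraph.fromRel fun x y =>
    ((x : ℕ) + 1 = y ∧ (y : ℕ) < k) ∨ ((x : ℕ) = s - 1 ∧ k ≤ (y : ℕ))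

/-- The caterpillar `CP(n; n_1, …, n_k)` : a path `v_1 ⋯ v_k` (at positions `0, …, k-1`),
where pendent vertex `j` (for `k ≤ j < n`) is attached to the path vertex at
position `f j` (so `n_i = |{j : f j = i - 1}|`). -/
def caterpillar (n k : ℕ) (f : ℕ → ℕ) : SimpleGraph (Fin n) :=
  SimpleGraph.fromRel fun x y =>
    ((x : ℕ) + 1 = y ∧ (y : ℕ) < k) ∨ (k ≤ (y : ℕ) ∧ (x : ℕ) = f y)

/-- The balanced starlike tree `SP_{n,q}` : the center is vertex `0`, and vertex
`j ≥ 1` lies on branch `(j - 1) % q` at depth `(j - 1)/q + 1`; so the `q` branches are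
paths whose orders pairwise differ by at most `1`. -/
def balancedStar (n q : ℕ) : SimpleGraph (Fin n) :=
  SimpleGraph.fromRel fun x y =>
    ((x : ℕ) = 0 ∧ 1 ≤ (y : ℕ) ∧ (y : ℕ) ≤ q) ∨ (1 ≤ (x : ℕ) ∧ (x : ℕ) + q = y)

/-- The edge-moving transformation of `G` w.r.t. the edge `uv`: contract `uv` to `u`
(moving all edges at `v` to `u`) and attach `v` to `u` as a pendent vertex. -/
def edgeMove (G : SimpleGraph V) (u v : V) : SimpleGraph V :=
  SimpleGraph.fromRel fun x y =>
    (G.Adj x y ∧ x ≠ v ∧ y ≠ v) ∨ (x = u ∧ y = v) ∨ (x = u ∧ G.Adj v y ∧ y ≠ u)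

open Relation

/-- `Step ρ p a b`: `b` is the parent of the non-root vertex `a`. -/
def Step (ρ : V) (p : V → V) (a b : V) : Prop := a ≠ ρ ∧ p a = b

/-- `Below ρ p y x`: `y` is a descendant of `x` (or `x` itself). -/
abbrev Below (ρ : V) (p : V → V) : V → V → Prop := ReflTransGen (Step ρ p)

/-- The set of descendants of `x`, including `x`. -/
noncomputable def desc [Fintype V] (ρ : V) (p : V → V) (x : V) : Finset V :=
  Finset.univ.filter fun y => Below ρ p y x

/-- `G` is the tree rooted at `ρ` with parent function `p`; `d` is a height function
certifying that iterating `p` ends at `ρ`. -/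
structure IsRooting (G : SimpleGraph V) (ρ : V) (p : V → V) (d : V → ℕ) : Prop where
  adj_iff : ∀ a b, G.Adj a b ↔ Step ρ p a b ∨ Step ρ p b a
  lt : ∀ a, a ≠ ρ → d (p a) < d a

lemma mem_desc [Fintype V] {ρ : V} {p : V → V} {x y : V} :
    y ∈ desc ρ p x ↔ Below ρ p y x := by
  simp [desc]

lemma step_rightUnique (ρ : V) (p : V → V) : Relator.RightUnique (Step ρ p) :=
  fun _ _ _ h h' => h.2.symm.trans h'.2

lemma below_root {ρ x : V} {p : V → V} (h : Below ρ p ρ x) : x = ρ := by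
  rcases ReflTransGen.cases_head h with h | ⟨c, hc, -⟩
  · exact h.symm
  · exact absurd rfl hc.1

namespace IsRooting

variable {G : SimpleGraph V} {ρ : V} {p : V → V} {d : V → ℕ}

lemma le_of_below (h : IsRooting G ρ p d) {x y : V} (hb : Below ρ p y x) : d x ≤ d y := by
  induction hb with
  | refl => exact le_rfl
  | tail _ hs ih =>
    have := h.lt _ hs.1
    rw [hs.2] at this
    omega

lemma eq_of_below_of_le (h : IsRooting G ρ p d) {x y : V} (hb : Below ρ p y x)
    (hd : d y ≤ d x) : y = x := by
  rcases ReflTransGen.cases_head hb with hb | ⟨c, hc, hcx⟩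
  · exact hb
  · have h1 := h.lt _ hc.1
    rw [hc.2] at h1
    have := h.le_of_below hcx
    omega

lemma below_antisymm (h : IsRooting G ρ p d) {x y : V} (hb : Below ρ p y x)
    (hb' : Below ρ p x y) : y = x :=
  h.eq_of_below_of_le hb (h.le_of_below hb')

lemma below_root (h : IsRooting G ρ p d) (x : V) : Below ρ p x ρ := by
  induction hd : d x using Nat.strong_induction_on generalizing x with
  | _ m ih =>
    by_cases hx : x = ρ
    · subst hx; exact .refl
    · exact .head ⟨hx, rfl⟩ (ih _ (hd ▸ h.lt x hx) _ rfl)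

lemma ne_parent (h : IsRooting G ρ p d) {x : V} (hx : x ≠ ρ) : x ≠ p x := by
  intro he
  have := h.lt x hx
  rw [← he] at this
  exact lt_irrefl _ this

lemma not_below_parent (h : IsRooting G ρ p d) {x : V} (hx : x ≠ ρ) : ¬ Below ρ p (p x) x := by
  intro hb
  have := h.le_of_below hb
  have := h.lt x hx
  omega

lemma connected (h : IsRooting G ρ p d) : G.Connected := by
  have hr : ∀ x, G.Reachable x ρ := by
    intro x
    have key : ∀ y, Below ρ p x y → G.Reachable x y := by
      intro y hb
      induction hb with
      | refl => rfl
      | tail _ hs ih => exact ih.trans ((h.adj_iff _ _).2 (Or.inl hs)).reachable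
    exact key ρ (h.below_root x)
  exact { preconnected := fun x y => (hr x).trans (hr y).symm, nonempty := ⟨ρ⟩ }

/-- Every non-root vertex lies below some child of the root. -/
lemma exists_top (h : IsRooting G ρ p d) {x : V} (hx : x ≠ ρ) :
    ∃ c, c ≠ ρ ∧ p c = ρ ∧ Below ρ p x c := by
  rcases ReflTransGen.cases_tail (h.below_root x) with hb | ⟨c, hc, hs⟩
  · exact absurd hb.symm hx
  · exact ⟨c, hs.1, hs.2, hc⟩

lemma top_unique {x c c' : V} (hc : c ≠ ρ) (hpc : p c = ρ)
    (hc' : c' ≠ ρ) (hpc' : p c' = ρ) (hx : Below ρ p x c) (hx' : Below ρ p x c') : c = c' := by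
  have key : ∀ a b : V, a ≠ ρ → p a = ρ → b ≠ ρ → Below ρ p a b → a = b := by
    intro a b _ hpa hb hab
    rcases ReflTransGen.cases_head hab with e | ⟨z, hz, hzb⟩
    · exact e
    · rw [← hz.2, hpa] at hzb
      exact absurd (TreeOrder.below_root hzb) hb
  rcases ReflTransGen.total_of_right_unique (step_rightUnique ρ p) hx hx' with hb | hb
  · exact key _ _ hc hpc hc' hb
  · exact (key _ _ hc' hpc' hc hb).symm

/-- Two distinct vertices with the same parent have no common descendant. -/
lemma eq_of_parent_eq (h : IsRooting G ρ p d) {x a b : V} (ha : a ≠ ρ) (hb : b ≠ ρ)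
    (hab : p a = p b) (hxa : Below ρ p x a) (hxb : Below ρ p x b) : a = b := by
  have key : ∀ a b : V, a ≠ ρ → b ≠ ρ → p a = p b → Below ρ p a b → a = b := by
    intro a b _ hb hab hbe
    rcases ReflTransGen.cases_head hbe with e | ⟨z, hz, hzb⟩
    · exact e
    · rw [← hz.2, hab] at hzb
      exact absurd hzb (h.not_below_parent hb)
  rcases ReflTransGen.total_of_right_unique (step_rightUnique ρ p) hxa hxb with hc | hc
  · exact key _ _ ha hb hab hc
  · exact (key _ _ hb ha hab.symm hc).symm

/-- Crossing out of the set of descendants of `w` goes through the edge from `w` to its parent. -/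
lemma mem_support_of_crossing (h : IsRooting G ρ p d) {w a b : V} (q : G.Walk a b)
    (ha : Below ρ p a w) (hb : ¬ Below ρ p b w) : w ∈ q.support ∧ p w ∈ q.support := by
  obtain ⟨e, he, h1, h2⟩ := q.exists_boundary_dart {y | Below ρ p y w} ha hb
  have hadj := e.adj
  simp only [Set.mem_ofPred_eq] at h1 h2
  rcases (h.adj_iff _ _).1 hadj with hs | hs
  · have hw : e.fst = w := by
      rcases ReflTransGen.cases_head h1 with hh | ⟨z, hz, hzw⟩
      · exact hh
      · rw [← hz.2, hs.2] at hzw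
        exact absurd hzw h2
    have hpw : e.snd = p w := by rw [← hs.2, hw]
    exact ⟨hw ▸ q.dart_fst_mem_support_of_mem_darts he,
      hpw ▸ q.dart_snd_mem_support_of_mem_darts he⟩
  · exact absurd (ReflTransGen.head hs h1) h2

lemma dist_lt_of_mem_support (hc : G.Connected) {a b z : V} (q : G.Walk a b)
    (hq : q.length = G.dist a b) (hz : z ∈ q.support) (hzb : z ≠ b) :
    G.dist a z < G.dist a b := by
  have h1 := SimpleGraph.dist_le (q.takeUntil z hz)
  have h2 := hc.pos_dist_of_ne hzb
  have h3 := SimpleGraph.dist_le (q.dropUntil z hz)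
  have h4 := congrArg SimpleGraph.Walk.length (q.take_spec hz)
  rw [SimpleGraph.Walk.length_append] at h4
  omega

lemma dist_lt_of_below (h : IsRooting G ρ p d) {w y : V} (hw : w ≠ ρ) (hy : Below ρ p y w) :
    G.dist y w < G.dist y (p w) := by
  obtain ⟨q, hq⟩ := h.connected.exists_walk_length_eq_dist y (p w)
  exact dist_lt_of_mem_support h.connected q hq
    (h.mem_support_of_crossing q hy (h.not_below_parent hw)).1 (h.ne_parent hw)

lemma dist_lt_of_not_below (h : IsRooting G ρ p d) {w y : V} (hw : w ≠ ρ)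
    (hy : ¬ Below ρ p y w) : G.dist y (p w) < G.dist y w := by
  obtain ⟨q, hq⟩ := h.connected.exists_walk_length_eq_dist y w
  have := (h.mem_support_of_crossing q.reverse .refl hy).2
  rw [SimpleGraph.Walk.support_reverse, List.mem_reverse] at this
  exact dist_lt_of_mem_support h.connected q hq this (h.ne_parent hw).symm

lemma ne_root_of_below {x y : V} (hy : y ≠ ρ) (hb : Below ρ p x y) : x ≠ ρ := by
  rintro rfl
  exact hy (TreeOrder.below_root hb)

variable [Fintype V]

lemma self_mem_desc (x : V) : x ∈ desc ρ p x := mem_desc.2 .refl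

lemma desc_subset {x y : V} (hb : Below ρ p y x) : desc ρ p y ⊆ desc ρ p x :=
  fun _ hz => mem_desc.2 ((mem_desc.1 hz).trans hb)

lemma desc_ssubset (h : IsRooting G ρ p d) {x y : V} (hb : Below ρ p y x) (hne : y ≠ x) :
    desc ρ p y ⊂ desc ρ p x := by
  refine (Finset.ssubset_iff_of_subset (desc_subset hb)).2 ⟨x, self_mem_desc x, fun hx => ?_⟩
  exact hne (h.below_antisymm hb (mem_desc.1 hx))

lemma card_desc_lt (h : IsRooting G ρ p d) {x y : V} (hb : Below ρ p y x) (hne : y ≠ x) :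
    (desc ρ p y).card < (desc ρ p x).card :=
  Finset.card_lt_card (h.desc_ssubset hb hne)

lemma card_desc_pos (x : V) : 0 < (desc ρ p x).card :=
  Finset.card_pos.2 ⟨x, self_mem_desc x⟩

lemma root_notMem_desc {x : V} (hx : x ≠ ρ) : ρ ∉ desc ρ p x :=
  fun hb => hx (TreeOrder.below_root (mem_desc.1 hb))

lemma card_desc_lt_card {x : V} (hx : x ≠ ρ) : (desc ρ p x).card < Fintype.card V :=
  Finset.card_lt_univ_of_notMem (root_notMem_desc hx)

lemma eq_of_card_desc_eq_one {x y : V} (hx : (desc ρ p x).card = 1) (hb : Below ρ p y x) :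
    y = x :=
  Finset.card_le_one.1 hx.le _ (mem_desc.2 hb) _ (self_mem_desc x)

/-- Every vertex has a leaf below it. -/
lemma exists_leaf (h : IsRooting G ρ p d) (x : V) :
    ∃ l, Below ρ p l x ∧ (desc ρ p l).card = 1 := by
  obtain ⟨l, hl, hmin⟩ := Finset.exists_min_image (desc ρ p x) (fun y => (desc ρ p y).card)
    ⟨x, self_mem_desc x⟩
  refine ⟨l, mem_desc.1 hl, le_antisymm (Finset.card_le_one.2 fun a ha b hb => ?_)
    (card_desc_pos l)⟩
  have key : ∀ a ∈ desc ρ p l, a = l := by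
    intro a ha
    by_contra hne
    have h1 := h.card_desc_lt (mem_desc.1 ha) hne
    have h2 := hmin a (desc_subset (mem_desc.1 hl) ha)
    omega
  rw [key a ha, key b hb]

lemma side_eq (h : IsRooting G ρ p d) {w : V} (hw : w ≠ ρ) :
    side G w (p w) = (desc ρ p w).card := by
  unfold side desc
  congr 1
  ext y
  simp only [Finset.mem_filter, Finset.mem_univ, true_and]
  refine ⟨fun hd => ?_, h.dist_lt_of_below hw⟩
  by_contra hy
  have := h.dist_lt_of_not_below hw hy
  omega

lemma side_add_side (h : IsRooting G ρ p d) {w : V} (hw : w ≠ ρ) :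
    side G w (p w) + side G (p w) w = Fintype.card V := by
  have : side G (p w) w = ((Finset.univ : Finset V).filter
      fun y => ¬ G.dist y w < G.dist y (p w)).card := by
    unfold side
    congr 1
    ext y
    simp only [Finset.mem_filter, Finset.mem_univ, true_and]
    by_cases hy : Below ρ p y w
    · have := h.dist_lt_of_below hw hy
      omega
    · have := h.dist_lt_of_not_below hw hy
      omega
  rw [this, side, Finset.card_filter_add_card_filter_not, Finset.card_univ]

lemma mu_eq (h : IsRooting G ρ p d) {w : V} (hw : w ≠ ρ) :
    mu G w (p w) = min (desc ρ p w).card (Fintype.card V - (desc ρ p w).card) := by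
  have h1 := h.side_eq hw
  have h2 := h.side_add_side hw
  unfold mu
  omega

/-- Edges of a rooted tree correspond to non-root vertices. -/
lemma r_eq (h : IsRooting G ρ p d) (i : ℕ) :
    r G i = (Finset.univ.filter fun w => w ≠ ρ ∧
      min (desc ρ p w).card (Fintype.card V - (desc ρ p w).card) = i).card := by
  symm
  unfold r
  refine Finset.card_bij (fun w _ => s(w, p w)) ?_ ?_ ?_
  · intro w hw
    simp only [Finset.mem_filter, Finset.mem_univ, true_and] at hw ⊢
    refine ⟨(h.adj_iff _ _).2 (Or.inl ⟨hw.1, rfl⟩), ?_⟩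
    rw [← hw.2, ← h.mu_eq hw.1]
    rfl
  · intro a ha b hb hab
    simp only [Finset.mem_filter, Finset.mem_univ, true_and] at ha hb
    rcases Sym2.eq_iff.1 hab with ⟨e, -⟩ | ⟨e1, e2⟩
    · exact e
    · have h1 := h.lt a ha.1
      have h2 := h.lt b hb.1
      rw [e2] at h1
      rw [← e1] at h2
      omega
  · intro e he
    induction e using Sym2.ind with
    | _ a b =>
      simp only [Finset.mem_filter, Finset.mem_univ, true_and] at he
      obtain ⟨he, hm⟩ := he
      rcases (h.adj_iff _ _).1 he with hs | hs
      · refine ⟨a, ?_, by rw [hs.2]⟩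
        simp only [Finset.mem_filter, Finset.mem_univ, true_and]
        refine ⟨hs.1, ?_⟩
        rw [← hm, ← h.mu_eq hs.1, hs.2]
        rfl
      · refine ⟨b, ?_, by rw [hs.2]; exact Sym2.eq_swap⟩
        simp only [Finset.mem_filter, Finset.mem_univ, true_and]
        refine ⟨hs.1, ?_⟩
        rw [← hm, ← h.mu_eq hs.1, hs.2, Sym2.eq_swap]
        rfl

/-- The non-root vertices whose parent edge has `μ ≥ k`. -/
noncomputable def heavy (ρ : V) (p : V → V) (k : ℕ) : Finset V :=
  Finset.univ.filter fun w => w ≠ ρ ∧ k ≤ (desc ρ p w).card ∧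
    (desc ρ p w).card + k ≤ Fintype.card V

lemma mem_heavy {k : ℕ} {w : V} : w ∈ heavy ρ p k ↔
    w ≠ ρ ∧ k ≤ (desc ρ p w).card ∧ (desc ρ p w).card + k ≤ Fintype.card V := by
  simp [heavy]

lemma tailSum_eq (h : IsRooting G ρ p d) (k : ℕ) :
    tailSum G (Fintype.card V) k = (heavy ρ p k).card := by
  unfold tailSum
  rw [Finset.card_eq_sum_card_fiberwise (s := heavy ρ p k)
    (f := fun w => min (desc ρ p w).card (Fintype.card V - (desc ρ p w).card))
    (t := Finset.Icc k (Fintype.card V / 2))]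
  · refine Finset.sum_congr rfl fun i hi => ?_
    rw [h.r_eq]
    congr 1
    ext w
    simp only [Finset.mem_filter, Finset.mem_univ, true_and, mem_heavy]
    rw [Finset.mem_Icc] at hi
    constructor
    · rintro ⟨h1, h2⟩
      have := card_desc_lt_card (p := p) h1
      exact ⟨⟨h1, by omega, by omega⟩, h2⟩
    · rintro ⟨h1, h2⟩
      exact ⟨h1.1, h2⟩
  · intro w hw
    have hw := mem_heavy.1 (Finset.mem_coe.1 hw)
    simp only [Finset.coe_Icc, Set.mem_Icc]
    omega

/-- The children of the root. -/
noncomputable def children (ρ : V) (p : V → V) : Finset V :=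
  Finset.univ.filter fun w => w ≠ ρ ∧ p w = ρ

lemma mem_children {w : V} : w ∈ children ρ p ↔ w ≠ ρ ∧ p w = ρ := by
  simp [children]

lemma deg_root (h : IsRooting G ρ p d) : deg G ρ = (children ρ p).card := by
  unfold deg children
  congr 1
  ext w
  simp only [Finset.mem_filter, Finset.mem_univ, true_and, h.adj_iff]
  exact ⟨fun hw => hw.resolve_left fun hh => hh.1 rfl, Or.inr⟩

end IsRooting

lemma exists_isRooting [Fintype V] {G : SimpleGraph V} (hT : G.IsTree) (ρ : V) :
    ∃ p : V → V, IsRooting G ρ p (fun x => G.dist x ρ) := by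
  have hex : ∀ x, ∃ y, x ≠ ρ → G.Adj x y ∧ G.dist y ρ < G.dist x ρ := by
    intro x
    by_cases hx : x = ρ
    · exact ⟨x, fun h => absurd hx h⟩
    obtain ⟨q, hq⟩ := hT.1.exists_walk_length_eq_dist x ρ
    cases q with
    | nil => exact absurd rfl hx
    | cons hadj q =>
      refine ⟨_, fun _ => ⟨hadj, ?_⟩⟩
      have := SimpleGraph.dist_le q
      rw [SimpleGraph.Walk.length_cons] at hq
      omega
  choose p hp using hex
  refine ⟨p, fun a b => ?_, fun a ha => (hp a ha).2⟩
  have hinj : Set.InjOn (fun w => s(w, p w)) {w | w ≠ ρ} := by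
    intro a ha b hb hab
    rcases Sym2.eq_iff.1 hab with ⟨e, -⟩ | ⟨e1, e2⟩
    · exact e
    · have h1 := (hp a ha).2
      have h2 := (hp b hb).2
      rw [e2] at h1
      rw [← e1] at h2
      omega
  have himg : ((Finset.univ.erase ρ).image fun w => s(w, p w)) = G.edgeFinset := by
    refine Finset.eq_of_subset_of_card_le ?_ ?_
    · intro e he
      simp only [Finset.mem_image, Finset.mem_erase, Finset.mem_univ, and_true] at he
      obtain ⟨w, hw, rfl⟩ := he
      rw [SimpleGraph.mem_edgeFinset]
      exact (hp w hw).1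
    · rw [Finset.card_image_of_injOn, Finset.card_erase_of_mem (Finset.mem_univ _),
        Finset.card_univ]
      · have := hT.card_edgeFinset
        omega
      · intro a ha b hb
        exact hinj (by simpa using ha) (by simpa using hb)
  constructor
  · intro hab
    have : s(a, b) ∈ G.edgeFinset := by rw [SimpleGraph.mem_edgeFinset]; exact hab
    rw [← himg] at this
    simp only [Finset.mem_image, Finset.mem_erase, Finset.mem_univ, and_true] at this
    obtain ⟨w, hw, e⟩ := this
    rcases Sym2.eq_iff.1 e with ⟨rfl, e2⟩ | ⟨rfl, e2⟩
    · exact Or.inl ⟨hw, e2⟩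
    · exact Or.inr ⟨hw, e2⟩
  · rintro (⟨h1, rfl⟩ | ⟨h1, rfl⟩)
    · exact (hp a h1).1
    · exact (hp b h1).1.symm

namespace IsRooting

variable {G : SimpleGraph V} {ρ : V} {p : V → V} {d : V → ℕ} [Fintype V]

/-- Below a minimal heavy vertex there are no further heavy vertices. -/
lemma exists_minimal_heavy (h : IsRooting G ρ p d) {k : ℕ} (hne : (heavy ρ p k).Nonempty) :
    ∃ w ∈ heavy ρ p k, Disjoint (heavy ρ p k) ((desc ρ p w).erase w) := by
  obtain ⟨w, hw, hmin⟩ := Finset.exists_min_image _ (fun w => (desc ρ p w).card) hne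
  refine ⟨w, hw, Finset.disjoint_left.2 fun x hx hx' => ?_⟩
  rw [Finset.mem_erase] at hx'
  have h1 := hmin x hx
  have h2 := h.card_desc_lt (mem_desc.1 hx'.2) hx'.1
  omega

lemma card_heavy_add_card_children_le (h : IsRooting G ρ p d) {k : ℕ} (hk : 2 ≤ k)
    (hne : (heavy ρ p k).Nonempty) :
    (heavy ρ p k).card + (children ρ p).card + k ≤ Fintype.card V + 1 := by
  obtain ⟨w, hw, hdis⟩ := h.exists_minimal_heavy hne
  have hw' := mem_heavy.1 hw
  obtain ⟨c₀, hc₀, hpc₀, hwc₀⟩ := h.exists_top hw'.1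
  choose l hl hl1 using h.exists_leaf
  set L := ((children ρ p).erase c₀).image l with hL
  have hlroot : ∀ c ∈ children ρ p, l c ≠ ρ := by
    intro c hc e
    have := hl c
    rw [e] at this
    exact (mem_children.1 hc).1 (TreeOrder.below_root this)
  have hLcard : L.card = (children ρ p).card - 1 := by
    rw [hL, Finset.card_image_of_injOn,
      Finset.card_erase_of_mem (mem_children.2 ⟨hc₀, hpc₀⟩)]
    intro a ha b hb hab
    have ha := mem_children.1 (Finset.mem_of_mem_erase (Finset.mem_coe.1 ha))
    have hb := mem_children.1 (Finset.mem_of_mem_erase (Finset.mem_coe.1 hb))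
    have hab : l a = l b := hab
    exact top_unique ha.1 ha.2 hb.1 hb.2 (hl a) (hab ▸ hl b)
  have hpos : 0 < (children ρ p).card :=
    Finset.card_pos.2 ⟨c₀, mem_children.2 ⟨hc₀, hpc₀⟩⟩
  have hLmem : ∀ x ∈ L, ∃ c ∈ children ρ p, c ≠ c₀ ∧ l c = x := by
    intro x hx
    obtain ⟨c, hc, rfl⟩ := Finset.mem_image.1 hx
    exact ⟨c, (Finset.mem_erase.1 hc).2, (Finset.mem_erase.1 hc).1, rfl⟩
  have d1 : Disjoint (heavy ρ p k ∪ (desc ρ p w).erase w) L := by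
    rw [Finset.disjoint_union_left]
    constructor
    · refine Finset.disjoint_left.2 fun x hx hx' => ?_
      obtain ⟨c, -, -, rfl⟩ := hLmem x hx'
      have := (mem_heavy.1 hx).2.1
      rw [hl1] at this
      omega
    · refine Finset.disjoint_left.2 fun x hx hx' => ?_
      obtain ⟨c, hc, hcc, rfl⟩ := hLmem x hx'
      have hc := mem_children.1 hc
      have hb := mem_desc.1 (Finset.mem_of_mem_erase hx)
      exact hcc (top_unique hc.1 hc.2 hc₀ hpc₀ (hl c) (hb.trans hwc₀))
  have d2 : ρ ∉ (heavy ρ p k ∪ (desc ρ p w).erase w) ∪ L := by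
    simp only [Finset.mem_union, not_or]
    refine ⟨⟨fun hh => (mem_heavy.1 hh).1 rfl, fun hh => ?_⟩, fun hh => ?_⟩
    · exact root_notMem_desc hw'.1 (Finset.mem_of_mem_erase hh)
    · obtain ⟨c, hc, -, e⟩ := hLmem ρ hh
      exact hlroot c hc e
  have := Finset.card_lt_univ_of_notMem d2
  rw [Finset.card_union_of_disjoint d1, Finset.card_union_of_disjoint hdis, hLcard,
    Finset.card_erase_of_mem (self_mem_desc w)] at this
  omega

end IsRooting

lemma tailSum_add_two_mul_le [Fintype V] {G : SimpleGraph V} (hT : G.IsTree) {k : ℕ}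
    (hpos : 0 < tailSum G (Fintype.card V) k) :
    tailSum G (Fintype.card V) k + 2 * k ≤ Fintype.card V + 1 := by
  obtain ⟨e, he, hmin⟩ : ∃ e : V × V, (G.Adj e.1 e.2 ∧ k ≤ side G e.1 e.2 ∧
      k ≤ side G e.2 e.1) ∧ ∀ a b : V, G.Adj a b → k ≤ side G a b → k ≤ side G b a →
        side G e.1 e.2 ≤ side G a b := by
    obtain ⟨ρ⟩ := hT.1.nonempty
    obtain ⟨p, h⟩ := exists_isRooting hT ρ
    rw [h.tailSum_eq, Finset.card_pos] at hpos
    obtain ⟨w, hw⟩ := hpos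
    have hw := IsRooting.mem_heavy.1 hw
    have h1 := h.side_eq hw.1
    have h2 := h.side_add_side hw.1
    obtain ⟨e, he, hmin⟩ := Finset.exists_min_image
      (Finset.univ.filter fun e : V × V => G.Adj e.1 e.2 ∧ k ≤ side G e.1 e.2 ∧
        k ≤ side G e.2 e.1) (fun e => side G e.1 e.2) ⟨(w, p w), by
          simp only [Finset.mem_filter, Finset.mem_univ, true_and]
          exact ⟨(h.adj_iff _ _).2 (Or.inl ⟨hw.1, rfl⟩), by omega, by omega⟩⟩
    simp only [Finset.mem_filter, Finset.mem_univ, true_and] at he hmin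
    exact ⟨e, he, fun a b hab ha hb => hmin (a, b) ⟨hab, ha, hb⟩⟩
  obtain ⟨ρ, w⟩ := e
  simp only at he hmin
  obtain ⟨hadj, hs1, hs2⟩ := he
  obtain ⟨p, h⟩ := exists_isRooting hT ρ
  rw [h.tailSum_eq] at hpos ⊢
  have hstep : w ≠ ρ ∧ p w = ρ := by
    rcases (h.adj_iff _ _).1 hadj with hs | hs
    · exact absurd rfl hs.1
    · exact hs
  have hsz := h.side_eq hstep.1
  have hsum := h.side_add_side hstep.1
  rw [hstep.2] at hsz hsum
  have hsub : IsRooting.heavy ρ p k ⊆ desc ρ p w := by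
    intro x hx
    have hx := IsRooting.mem_heavy.1 hx
    have hxs := h.side_eq hx.1
    have hxsum := h.side_add_side hx.1
    have hle := hmin x (p x) ((h.adj_iff _ _).2 (Or.inl ⟨hx.1, rfl⟩)) (by omega) (by omega)
    by_contra hxw
    have hdis : Disjoint (desc ρ p x) (desc ρ p w) := by
      refine Finset.disjoint_left.2 fun z hzx hzw => ?_
      rw [mem_desc] at hzx hzw
      rcases ReflTransGen.total_of_right_unique (step_rightUnique ρ p) hzx hzw with hb | hb
      · exact hxw (mem_desc.2 hb)
      · rcases ReflTransGen.cases_head hb with hh | ⟨z', hz', hzb⟩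
        · exact hxw (mem_desc.2 (hh ▸ .refl))
        · rw [← hz'.2, hstep.2] at hzb
          exact hx.1 (below_root hzb)
    have hroot : ρ ∉ desc ρ p x ∪ desc ρ p w := by
      rw [Finset.mem_union, not_or]
      exact ⟨IsRooting.root_notMem_desc hx.1, IsRooting.root_notMem_desc hstep.1⟩
    have := Finset.card_lt_univ_of_notMem hroot
    rw [Finset.card_union_of_disjoint hdis] at this
    omega
  obtain ⟨u, hu, hdis⟩ := h.exists_minimal_heavy (Finset.card_pos.1 hpos)
  have hu' := IsRooting.mem_heavy.1 hu
  have hle : IsRooting.heavy ρ p k ∪ (desc ρ p u).erase u ⊆ desc ρ p w := by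
    refine Finset.union_subset hsub fun x hx => ?_
    exact IsRooting.desc_subset (mem_desc.1 (hsub hu)) (Finset.mem_of_mem_erase hx)
  have := Finset.card_le_card hle
  rw [Finset.card_union_of_disjoint hdis,
    Finset.card_erase_of_mem (IsRooting.self_mem_desc u)] at this
  omega

/-- The parent function of the double star `CP_{n;1,b}` rooted at position `c = n - b - 1`. -/
def broomParent {n : ℕ} (c : Fin n) (x : Fin n) : Fin n :=
  if h : x < c then ⟨x + 1, by omega⟩ else c

lemma broomParent_of_lt {n : ℕ} {c x : Fin n} (h : x < c) :
    (broomParent c x : ℕ) = x + 1 := by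
  simp [broomParent, h]

lemma broomParent_of_not_lt {n : ℕ} {c x : Fin n} (h : ¬ x < c) : broomParent c x = c := by
  simp [broomParent, h]

lemma broomParent_le {n : ℕ} (c x : Fin n) : broomParent c x ≤ c := by
  by_cases h : x < c
  · have := broomParent_of_lt h
    rw [Fin.le_def]
    omega
  · exact (broomParent_of_not_lt h).le

lemma isRooting_doubleStar {n b : ℕ} (c : Fin n) (hc : (c : ℕ) = n - b - 1) (hc0 : 1 ≤ (c : ℕ)) :
    IsRooting (doubleStar n 1 b) c (broomParent c)
      (fun x => if x ≤ c then (c : ℕ) - x else 1) := by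
  refine ⟨fun x y => ?_, fun x hx => ?_⟩
  · have hpar : ∀ x y : Fin n, Step c (broomParent c) x y ↔
        ((x : ℕ) < c ∧ (y : ℕ) = x + 1) ∨ ((c : ℕ) < x ∧ y = c) := by
      intro x y
      unfold Step
      by_cases hx : x < c
      · have h1 := broomParent_of_lt hx
        simp only [ne_eq, Fin.ext_iff, h1]
        omega
      · simp only [broomParent_of_not_lt hx, ne_eq, Fin.ext_iff]
        omega
    rw [hpar, hpar]
    unfold doubleStar
    rw [SimpleGraph.fromRel_adj]
    simp only [ne_eq, Fin.ext_iff]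
    omega
  · by_cases hxc : x < c
    · have h1 := broomParent_of_lt hxc
      have h2 := broomParent_le c x
      rw [if_pos h2, if_pos hxc.le]
      omega
    · rw [broomParent_of_not_lt hxc, if_pos le_rfl, if_neg (by omega)]
      omega

lemma card_desc_broom_of_lt {n : ℕ} {c x : Fin n} (hx : x < c) :
    (desc c (broomParent c) x).card = x + 1 := by
  have : desc c (broomParent c) x = Finset.Iic x := by
    ext y
    rw [mem_desc, Finset.mem_Iic]
    constructor
    · intro hb
      induction hb using ReflTransGen.head_induction_on with
      | refl => exact le_rfl
      | head hs _ ih =>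
        rename_i a b _
        by_cases ha : a < c
        · have h1 := broomParent_of_lt ha
          rw [hs.2] at h1
          omega
        · have h1 := broomParent_of_not_lt ha
          rw [hs.2] at h1
          omega
    · intro hy
      induction hm : (x : ℕ) - y generalizing y with
      | zero =>
        have : y = x := by omega
        subst this
        exact .refl
      | succ m ih =>
        have hyc : y < c := lt_of_le_of_lt hy hx
        have h1 := broomParent_of_lt hyc
        exact .head ⟨hyc.ne, rfl⟩ (ih _ (by omega) (by omega))
  rw [this, Fin.card_Iic]

lemma card_desc_broom_of_gt {n : ℕ} {c x : Fin n} (hx : c < x) :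
    (desc c (broomParent c) x).card = 1 := by
  have : desc c (broomParent c) x = {x} := by
    ext y
    rw [mem_desc, Finset.mem_singleton]
    constructor
    · intro hb
      rcases ReflTransGen.cases_tail hb with e | ⟨z, -, hz⟩
      · exact e.symm
      · have := broomParent_le c z
        rw [hz.2] at this
        exact absurd this (not_le.2 hx)
    · rintro rfl
      exact .refl
  rw [this, Finset.card_singleton]

lemma le_tailSum_doubleStar {n b k : ℕ} (c : Fin n) (hc : (c : ℕ) = n - b - 1)
    (hc0 : 1 ≤ (c : ℕ)) (hk : 1 ≤ k) :
    min (c : ℕ) (n - k) + 1 - k ≤ tailSum (doubleStar n 1 b) n k := by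
  have h := (isRooting_doubleStar c hc hc0).tailSum_eq k
  rw [Fintype.card_fin] at h
  rw [h, ← Nat.card_Icc]
  refine Finset.card_le_card_of_surjOn (fun x => (desc c (broomParent c) x).card) ?_
  intro m hm
  rw [Finset.coe_Icc, Set.mem_Icc] at hm
  have hlt : (⟨m - 1, by omega⟩ : Fin n) < c := by
    rw [Fin.lt_def]
    simp only
    omega
  have hs := card_desc_broom_of_lt hlt
  simp only at hs
  refine ⟨⟨m - 1, by omega⟩, ?_, ?_⟩
  · rw [Finset.mem_coe, IsRooting.mem_heavy, hs, Fintype.card_fin]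
    exact ⟨hlt.ne, by omega, by omega⟩
  · simp only [hs]
    omega

lemma tailSum_one [Fintype V] {G : SimpleGraph V} {ρ : V} {p : V → V} {d : V → ℕ}
    (h : IsRooting G ρ p d) : tailSum G (Fintype.card V) 1 = Fintype.card V - 1 := by
  rw [h.tailSum_eq, ← Finset.card_univ, ← Finset.card_erase_of_mem (Finset.mem_univ ρ)]
  congr 1
  ext w
  rw [IsRooting.mem_heavy, Finset.mem_erase]
  refine ⟨fun hw => ⟨hw.1, Finset.mem_univ w⟩, fun hw => ⟨hw.1, ?_, ?_⟩⟩
  · exact IsRooting.card_desc_pos w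
  · exact IsRooting.card_desc_lt_card hw.1

lemma r_doubleStar_one {n b : ℕ} (c : Fin n) (hc : (c : ℕ) = n - b - 1)
    (hc0 : 1 ≤ (c : ℕ)) (hb : 1 ≤ b) : r (doubleStar n 1 b) 1 ≤ b + 1 := by
  rw [(isRooting_doubleStar c hc hc0).r_eq, Fintype.card_fin]
  refine le_trans (Finset.card_le_card (t := insert ⟨0, by omega⟩ (Finset.Ioi c))
    fun w hw => ?_) (le_trans (Finset.card_insert_le _ _) ?_)
  · simp only [Finset.mem_filter, Finset.mem_univ, true_and] at hw
    rw [Finset.mem_insert, Finset.mem_Ioi]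
    rcases lt_or_gt_of_ne hw.1 with hlt | hlt
    · rw [card_desc_broom_of_lt hlt] at hw
      left
      rw [Fin.ext_iff]
      simp only
      omega
    · exact Or.inr hlt
  · rw [Fin.card_Ioi]
    omega

lemma r_doubleStar_two {n b : ℕ} (c : Fin n) (hc : (c : ℕ) = n - b - 1)
    (hc0 : 1 ≤ (c : ℕ)) (hb : 2 ≤ b) : r (doubleStar n 1 b) 2 ≤ 1 := by
  rw [(isRooting_doubleStar c hc hc0).r_eq, Fintype.card_fin, Finset.card_le_one]
  have key : ∀ w : Fin n, w ≠ c →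
      min (desc c (broomParent c) w).card (n - (desc c (broomParent c) w).card) = 2 →
      (w : ℕ) = 1 := by
    intro w hw hmin
    rcases lt_or_gt_of_ne hw with hlt | hlt
    · rw [card_desc_broom_of_lt hlt] at hmin
      omega
    · rw [card_desc_broom_of_gt hlt] at hmin
      omega
  intro x hx y hy
  simp only [Finset.mem_filter, Finset.mem_univ, true_and] at hx hy
  rw [Fin.ext_iff, key x hx.1 hx.2, key y hy.1 hy.2]

namespace IsRooting

variable {G : SimpleGraph V} {ρ : V} {p : V → V} {d : V → ℕ} [Fintype V]

lemma card_desc_lt_parent (h : IsRooting G ρ p d) {x : V} (hx : x ≠ ρ) :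
    (desc ρ p x).card < (desc ρ p (p x)).card :=
  h.card_desc_lt (.single ⟨hx, rfl⟩) (h.ne_parent hx)

/-- A vertex with at least two descendants has a child. -/
lemma exists_child {x : V} (hx : 2 ≤ (desc ρ p x).card) : ∃ y, y ≠ ρ ∧ p y = x := by
  obtain ⟨z, hz, hne⟩ := Finset.exists_mem_ne (by omega : 1 < (desc ρ p x).card) x
  rcases ReflTransGen.cases_tail (mem_desc.1 hz) with e | ⟨y, -, hy⟩
  · exact absurd e.symm hne
  · exact ⟨y, hy.1, hy.2⟩

lemma card_desc_parent (h : IsRooting G ρ p d) {x : V} (hx : x ≠ ρ)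
    (huniq : ∀ y, y ≠ ρ → p y = p x → y = x) :
    (desc ρ p (p x)).card = (desc ρ p x).card + 1 := by
  have : desc ρ p (p x) = insert (p x) (desc ρ p x) := by
    ext z
    rw [Finset.mem_insert, mem_desc, mem_desc]
    constructor
    · intro hz
      rcases ReflTransGen.cases_tail hz with e | ⟨y, hzy, hy⟩
      · exact Or.inl e.symm
      · rw [huniq y hy.1 hy.2] at hzy
        exact Or.inr hzy
    · rintro (rfl | hz)
      · exact .refl
      · exact hz.tail ⟨hx, rfl⟩
  rw [this, Finset.card_insert_of_notMem]
  rw [mem_desc]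
  exact h.not_below_parent hx

/-- The non-root vertices without children. -/
noncomputable def leaves (ρ : V) (p : V → V) : Finset V :=
  Finset.univ.filter fun w => w ≠ ρ ∧ (desc ρ p w).card = 1

lemma mem_leaves {w : V} : w ∈ leaves ρ p ↔ w ≠ ρ ∧ (desc ρ p w).card = 1 := by
  simp [leaves]

/-- If there are no more leaves than children of the root, then each branch has exactly one leaf. -/
lemma leaf_unique (h : IsRooting G ρ p d) (hle : (leaves ρ p).card ≤ (children ρ p).card) :
    (leaves ρ p).card = (children ρ p).card ∧
      ∀ c ∈ children ρ p, ∀ a b, (desc ρ p a).card = 1 → (desc ρ p b).card = 1 →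
        Below ρ p a c → Below ρ p b c → a = b := by
  choose l hl hl1 using h.exists_leaf
  have hinj : Set.InjOn l (children ρ p) := by
    intro a ha b hb hab
    have ha := mem_children.1 (Finset.mem_coe.1 ha)
    have hb := mem_children.1 (Finset.mem_coe.1 hb)
    exact top_unique ha.1 ha.2 hb.1 hb.2 (hl a) (hab ▸ hl b)
  have himg : (children ρ p).image l = leaves ρ p := by
    refine Finset.eq_of_subset_of_card_le ?_ ?_
    · intro x hx
      obtain ⟨c, hc, rfl⟩ := Finset.mem_image.1 hx
      exact mem_leaves.2 ⟨ne_root_of_below (mem_children.1 hc).1 (hl c), hl1 c⟩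
    · rwa [Finset.card_image_of_injOn hinj]
  refine ⟨by rw [← himg, Finset.card_image_of_injOn hinj], ?_⟩
  have key : ∀ c ∈ children ρ p, ∀ a, (desc ρ p a).card = 1 → Below ρ p a c → a = l c := by
    intro c hc a ha hac
    have hc := mem_children.1 hc
    have : a ∈ leaves ρ p := mem_leaves.2 ⟨ne_root_of_below hc.1 hac, ha⟩
    rw [← himg] at this
    obtain ⟨c', hc', rfl⟩ := Finset.mem_image.1 this
    have hc' := mem_children.1 hc'
    rw [top_unique hc'.1 hc'.2 hc.1 hc.2 (hl c') hac]
  intro c hc a b ha hb hac hbc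
  rw [key c hc a ha hac, key c hc b hb hbc]

lemma child_unique (h : IsRooting G ρ p d) (hle : (leaves ρ p).card ≤ (children ρ p).card)
    {x y : V} (hx : x ≠ ρ) (hy : y ≠ ρ) (hpx : p x ≠ ρ) (hxy : p x = p y) : x = y := by
  obtain ⟨a, hax, ha⟩ := h.exists_leaf x
  obtain ⟨b, hby, hb⟩ := h.exists_leaf y
  obtain ⟨c, hc, hpc, hxc⟩ := h.exists_top hpx
  have hab := (h.leaf_unique hle).2 c (mem_children.2 ⟨hc, hpc⟩) a b ha hb
    (hax.trans (.head ⟨hx, rfl⟩ hxc)) (hby.trans (.head ⟨hy, hxy.symm⟩ hxc))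
  exact h.eq_of_parent_eq hx hy hxy hax (hab ▸ hby)

/-- With at most one vertex having two descendants, the number of descendants determines every
non-root vertex that is not a leaf. -/
lemma eq_of_card_desc_eq (h : IsRooting G ρ p d)
    (hle : (leaves ρ p).card ≤ (children ρ p).card)
    (h2 : ∀ x y, x ≠ ρ → y ≠ ρ → (desc ρ p x).card = 2 → (desc ρ p y).card = 2 → x = y)
    {x y : V} (hx : x ≠ ρ) (hy : y ≠ ρ) (hx2 : 2 ≤ (desc ρ p x).card)
    (hxy : (desc ρ p x).card = (desc ρ p y).card) : x = y := by
  induction hm : (desc ρ p x).card using Nat.strong_induction_on generalizing x y with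
  | _ m ih =>
    by_cases hm2 : m = 2
    · exact h2 x y hx hy (by omega) (by omega)
    · obtain ⟨a, ha, rfl⟩ := exists_child hx2
      obtain ⟨b, hb, rfl⟩ := exists_child (hxy ▸ hx2)
      have e1 := h.card_desc_parent ha fun z hz hza =>
        h.child_unique hle hz ha (hza ▸ hx) hza
      have e2 := h.card_desc_parent hb fun z hz hzb =>
        h.child_unique hle hz hb (hzb ▸ hy) hzb
      rw [ih (desc ρ p a).card (by omega) ha hb (by omega) (by omega) rfl]

/-- A rooted tree with as many leaves as children of the root, and at most one vertex with two
descendants, is a broom. -/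
lemma nonempty_iso_doubleStar (h : IsRooting G ρ p d) {b : ℕ} (hb : 1 ≤ b)
    (hn : b + 3 ≤ Fintype.card V) (hch : (children ρ p).card = b + 1)
    (hle : (leaves ρ p).card ≤ b + 1)
    (h2 : ∀ x y, x ≠ ρ → y ≠ ρ → (desc ρ p x).card = 2 → (desc ρ p y).card = 2 → x = y) :
    Nonempty (G ≃g doubleStar (Fintype.card V) 1 b) := by
  rw [← hch] at hle
  have hcu := fun {x y : V} => h.child_unique (x := x) (y := y) hle
  have hL : (leaves ρ p).card = b + 1 := by rw [(h.leaf_unique hle).1, hch]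
  have hpar : ∀ x, x ≠ ρ → p x ≠ ρ → (desc ρ p (p x)).card = (desc ρ p x).card + 1 :=
    fun x hx hpx => h.card_desc_parent hx fun z hz hzx => hcu hz hx (hzx ▸ hpx) hzx
  -- some leaf is not a child of the root
  obtain ⟨l, hl, hpl⟩ : ∃ l ∈ leaves ρ p, p l ≠ ρ := by
    by_contra! hcon
    have hsub : leaves ρ p ⊆ children ρ p := fun x hx =>
      mem_children.2 ⟨(mem_leaves.1 hx).1, hcon x hx⟩
    have heq := Finset.eq_of_subset_of_card_le hsub (by omega)
    have huniv : (Finset.univ : Finset V) ⊆ insert ρ (children ρ p) := by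
      intro x _
      by_cases hx : x = ρ
      · rw [hx]; exact Finset.mem_insert_self _ _
      · obtain ⟨c, hc, hpc, hxc⟩ := h.exists_top hx
        have hcc : c ∈ children ρ p := mem_children.2 ⟨hc, hpc⟩
        rw [← heq] at hcc
        rw [eq_of_card_desc_eq_one (mem_leaves.1 hcc).2 hxc]
        exact Finset.mem_insert_of_mem (mem_children.2 ⟨hc, hpc⟩)
    have := (Finset.card_le_card huniv).trans (Finset.card_insert_le _ _)
    rw [Finset.card_univ] at this
    omega
  have hl' := mem_leaves.1 hl
  have hpl2 : (desc ρ p (p l)).card = 2 := by rw [hpar l hl'.1 hpl, hl'.2]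
  set O := (leaves ρ p).erase l with hO
  have hOcard : O.card = b := by rw [hO, Finset.card_erase_of_mem hl, hL]; rfl
  have hOpar : ∀ x ∈ O, p x = ρ := by
    intro x hx
    rw [hO, Finset.mem_erase, mem_leaves] at hx
    by_contra hpx
    have e := hpar x hx.2.1 hpx
    rw [hx.2.2] at e
    have e' := h2 _ _ hpx hpl e hpl2
    exact hx.1 (hcu hx.2.1 hl'.1 hpx e')
  have hOne : ∀ x ∈ O, x ≠ ρ := fun x hx => (mem_leaves.1 (Finset.mem_of_mem_erase hx)).1
  have hO1 : ∀ x ∈ O, (desc ρ p x).card = 1 :=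
    fun x hx => (mem_leaves.1 (Finset.mem_of_mem_erase hx)).2
  -- outside `O`, vertices are determined by their number of descendants
  have hS : ∀ x y, x ≠ ρ → y ≠ ρ → x ∉ O → y ∉ O →
      (desc ρ p x).card = (desc ρ p y).card → x = y := by
    intro x y hx hy hxO hyO hxy
    by_cases hx2 : 2 ≤ (desc ρ p x).card
    · exact h.eq_of_card_desc_eq hle h2 hx hy hx2 hxy
    · have h1 := card_desc_pos (ρ := ρ) (p := p) x
      have key : ∀ z, z ≠ ρ → z ∉ O → (desc ρ p z).card = 1 → z = l := by
        intro z hz hzO hz1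
        by_contra hzl
        exact hzO (Finset.mem_erase.2 ⟨hzl, mem_leaves.2 ⟨hz, hz1⟩⟩)
      rw [key x hx hxO (by omega), key y hy hyO (by omega)]
  set n := Fintype.card V with hndef
  have hSle : ∀ x, x ≠ ρ → x ∉ O → (desc ρ p x).card + b + 1 ≤ n := by
    intro x hx hxO
    have hdis : Disjoint (desc ρ p x) O := by
      refine Finset.disjoint_left.2 fun z hz hzO => ?_
      rcases ReflTransGen.cases_head (mem_desc.1 hz) with e | ⟨y, hy, hyx⟩
      · exact hxO (e ▸ hzO)
      · rw [← hy.2, hOpar z hzO] at hyx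
        exact hx (TreeOrder.below_root hyx)
    have hroot : ρ ∉ desc ρ p x ∪ O := by
      rw [Finset.mem_union, not_or]
      exact ⟨root_notMem_desc hx, fun hh => hOne _ hh rfl⟩
    have := Finset.card_lt_univ_of_notMem hroot
    rw [Finset.card_union_of_disjoint hdis, hOcard] at this
    omega
  let e : O ≃ Fin b := Fintype.equivFinOfCardEq (by rw [Fintype.card_coe, hOcard])
  let c : Fin n := ⟨n - b - 1, by omega⟩
  have hcv : (c : ℕ) = n - b - 1 := rfl
  have hvals : ∃ f : V → Fin n, f ρ = c ∧
      (∀ x, x ≠ ρ → x ∉ O → (f x : ℕ) + 1 = (desc ρ p x).card) ∧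
      (∀ x, ∀ hx : x ∈ O, (f x : ℕ) = c + 1 + e ⟨x, hx⟩) := by
    refine ⟨fun x => if x = ρ then c else if hx : x ∈ O then
      ⟨c + 1 + e ⟨x, hx⟩, by omega⟩ else ⟨(desc ρ p x).card - 1, ?_⟩, ?_, ?_, ?_⟩
    · have := Finset.card_le_univ (desc ρ p x)
      omega
    · simp
    · intro x hx hxO
      have := card_desc_pos (ρ := ρ) (p := p) x
      simp only [hx, hxO, if_false, dif_neg, not_false_eq_true]
      omega
    · intro x hx
      simp [hOne x hx, hx]
  obtain ⟨f, hfρ, hfS, hfO⟩ := hvals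
  have hfSlt : ∀ x, x ≠ ρ → x ∉ O → f x < c := by
    intro x hx hxO
    have h1 := hfS x hx hxO
    have h2 := hSle x hx hxO
    rw [Fin.lt_def]
    omega
  have hfOgt : ∀ x, x ∈ O → c < f x := by
    intro x hx
    have h1 := hfO x hx
    rw [Fin.lt_def]
    omega
  have hinj : Function.Injective f := by
    intro x y hxy
    have hcase : ∀ z, z = ρ ∨ z ∈ O ∨ (z ≠ ρ ∧ z ∉ O) := fun z => by tauto
    rcases hcase x with rfl | hx | ⟨hx, hxO⟩ <;> rcases hcase y with rfl | hy | ⟨hy, hyO⟩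
    · rfl
    · have := hfOgt y hy
      rw [← hxy, hfρ] at this
      exact absurd this (lt_irrefl _)
    · have := hfSlt y hy hyO
      rw [← hxy, hfρ] at this
      exact absurd this (lt_irrefl _)
    · have := hfOgt x hx
      rw [hxy, hfρ] at this
      exact absurd this (lt_irrefl _)
    · have h1 := hfO x hx
      have h2 := hfO y hy
      have : e ⟨x, hx⟩ = e ⟨y, hy⟩ := by
        rw [Fin.ext_iff]
        omega
      exact congrArg Subtype.val (e.injective this)
    · have h1 := hfOgt x hx
      have h2 := hfSlt y hy hyO
      rw [hxy] at h1
      exact absurd (h1.trans h2) (lt_irrefl _)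
    · have := hfSlt x hx hxO
      rw [hxy, hfρ] at this
      exact absurd this (lt_irrefl _)
    · have h1 := hfSlt x hx hxO
      have h2 := hfOgt y hy
      rw [← hxy] at h2
      exact absurd (h1.trans h2) (lt_irrefl _)
    · have h1 := hfS x hx hxO
      have h2 := hfS y hy hyO
      rw [hxy] at h1
      exact hS x y hx hy hxO hyO (by omega)
  have hbij : Function.Bijective f :=
    (Fintype.bijective_iff_injective_and_card f).2 ⟨hinj, by rw [Fintype.card_fin]⟩
  have hcomm : ∀ x, x ≠ ρ → f (p x) = broomParent c (f x) := by
    intro x hx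
    by_cases hxO : x ∈ O
    · rw [hOpar x hxO, hfρ, broomParent_of_not_lt (not_lt.2 (hfOgt x hxO).le)]
    · have hlt := hfSlt x hx hxO
      rw [Fin.ext_iff, broomParent_of_lt hlt]
      have hfx := hfS x hx hxO
      by_cases hpx : p x = ρ
      · rw [hpx, hfρ]
        by_contra hne
        obtain ⟨z, hz⟩ := hbij.2 ⟨f x + 1, by omega⟩
        have hzv : (f z : ℕ) = f x + 1 := by rw [hz]
        have hzρ : z ≠ ρ := by
          rintro rfl
          rw [hfρ] at hzv
          exact hne hzv
        have hzO : z ∉ O := by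
          intro hzO
          have := hfOgt z hzO
          omega
        have hfz := hfS z hzρ hzO
        obtain ⟨y, hy, rfl⟩ := exists_child (ρ := ρ) (p := p) (x := z) (by omega)
        have hyc := hpar y hy hzρ
        have : y = x := hS y x hy hx (fun hh => hzρ (hOpar y hh)) hxO (by omega)
        exact hzρ (this ▸ hpx)
      · have hpO : p x ∉ O := by
          intro hh
          have h1 := hO1 _ hh
          have h2 := h.card_desc_lt_parent hx
          have h3 := card_desc_pos (ρ := ρ) (p := p) x
          omega
        have h1 := hfS (p x) hpx hpO
        have h2 := hpar x hx hpx
        omega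
  have hroot := isRooting_doubleStar (b := b) c hcv (by omega)
  have hstep : ∀ x y, Step c (broomParent c) (f x) (f y) ↔ Step ρ p x y := by
    intro x y
    unfold Step
    have hne : f x ≠ c ↔ x ≠ ρ := by rw [← hfρ]; exact hinj.ne_iff
    rw [hne]
    refine and_congr_right fun hx => ?_
    rw [← hcomm x hx, hinj.eq_iff]
  exact ⟨{ toEquiv := Equiv.ofBijective f hbij
           map_rel_iff' := fun {x y} => by
             rw [Equiv.ofBijective_apply, Equiv.ofBijective_apply, hroot.adj_iff, h.adj_iff,
               hstep, hstep] }⟩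

end IsRooting

lemma dist_iso {G : SimpleGraph V} {H : SimpleGraph W} (φ : G ≃g H) (hG : G.Connected)
    (x y : V) : H.dist (φ x) (φ y) = G.dist x y := by
  refine le_antisymm ?_ ?_
  · obtain ⟨q, hq⟩ := hG.exists_walk_length_eq_dist x y
    rw [← hq, ← SimpleGraph.Walk.length_map φ.toHom q]
    exact SimpleGraph.dist_le _
  · obtain ⟨q, hq⟩ := ((SimpleGraph.Iso.connected_iff φ).1 hG).exists_walk_length_eq_dist
      (φ x) (φ y)
    have := SimpleGraph.dist_le (q.map φ.symm.toHom)
    rw [SimpleGraph.Walk.length_map, hq] at this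
    simpa using this

lemma side_iso [Fintype V] [Fintype W] {G : SimpleGraph V} {H : SimpleGraph W} (φ : G ≃g H)
    (hG : G.Connected) (x y : V) : side H (φ x) (φ y) = side G x y := by
  unfold side
  refine (Finset.card_equiv φ.toEquiv fun w => ?_).symm
  simp only [Finset.mem_filter, Finset.mem_univ, true_and]
  rw [← dist_iso φ hG, ← dist_iso φ hG]
  rfl

lemma r_iso [Fintype V] [Fintype W] {G : SimpleGraph V} {H : SimpleGraph W} (φ : G ≃g H)
    (hG : G.Connected) (i : ℕ) : r G i = r H i := by
  unfold r
  let ψ : Sym2 V ≃ Sym2 W :=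
    { toFun := Sym2.map φ
      invFun := Sym2.map φ.symm
      left_inv := fun e => by
        rw [Sym2.map_map]
        exact Sym2.ind (fun x y => by simp) e
      right_inv := fun e => by
        rw [Sym2.map_map]
        exact Sym2.ind (fun x y => by simp) e }
  refine Finset.card_equiv ψ fun e => ?_
  induction e using Sym2.ind with
  | _ x y =>
    simp only [Finset.mem_filter, Finset.mem_univ, true_and]
    have h1 : muE H (ψ s(x, y)) = muE G s(x, y) := by
      change min (side H (φ x) (φ y)) (side H (φ y) (φ x)) = min (side G x y) (side G y x)
      rw [side_iso φ hG, side_iso φ hG]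
    rw [h1]
    exact and_congr_left fun _ => (φ.map_rel_iff (a := x) (b := y)).symm

/-- Let `T` be a tree on `n` vertices with maximum degree `Δ`, where
`2 < Δ < n − 1`. Then `T ⪯ CP_{n;1,Δ−1}`, and `r(T) = r(CP_{n;1,Δ−1})` iff `T` is
isomorphic to `CP_{n;1,Δ−1}`. -/
theorem stmt18 {V : Type*} [Fintype V] (G : SimpleGraph V) (hT : G.IsTree) (Δ : ℕ)
    (hub : ∀ v, deg G v ≤ Δ) (hattained : ∃ v, deg G v = Δ)
    (hΔ2 : 2 < Δ) (hΔn : Δ < Fintype.card V - 1) :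
    Preceq (Fintype.card V) G (doubleStar (Fintype.card V) 1 (Δ - 1)) ∧
    (SameEdgeDivision (Fintype.card V) G (doubleStar (Fintype.card V) 1 (Δ - 1)) ↔
      Nonempty (G ≃g doubleStar (Fintype.card V) 1 (Δ - 1))) := by
  obtain ⟨v, hv⟩ := hattained
  obtain ⟨p, h⟩ := exists_isRooting hT v
  have hch : (IsRooting.children v p).card = Δ := by rw [← h.deg_root, hv]
  let c : Fin (Fintype.card V) := ⟨Fintype.card V - (Δ - 1) - 1, by omega⟩
  have hcv : (c : ℕ) = Fintype.card V - (Δ - 1) - 1 := rfl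
  refine ⟨fun k hk1 hk2 => ?_, fun hr => ?_, fun ⟨φ⟩ i _ _ => r_iso φ hT.1 i⟩
  · rcases Nat.eq_or_lt_of_le hk1 with rfl | hk
    · have hstar := tailSum_one (isRooting_doubleStar (b := Δ - 1) c hcv (by omega))
      rw [Fintype.card_fin] at hstar
      rw [tailSum_one h, hstar]
    · have hlow := le_tailSum_doubleStar (k := k) c hcv (by omega) hk1
      rcases Nat.eq_zero_or_pos (tailSum G (Fintype.card V) k) with h0 | hpos
      · rw [h0]
        exact Nat.zero_le _
      · have h1 := tailSum_add_two_mul_le hT hpos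
        rw [h.tailSum_eq] at h1 hpos ⊢
        have h2 := h.card_heavy_add_card_children_le hk (Finset.card_pos.1 hpos)
        omega
  · have hr1 := (hr 1 le_rfl (by omega)).le.trans
      (r_doubleStar_one (b := Δ - 1) c hcv (by omega) (by omega))
    have hr2 := (hr 2 (by omega) (by omega)).le.trans
      (r_doubleStar_two (b := Δ - 1) c hcv (by omega) (by omega))
    rw [h.r_eq] at hr1 hr2
    refine h.nonempty_iso_doubleStar (by omega) (by omega) (by omega)
      ((Finset.card_le_card fun x hx => ?_).trans hr1) fun x y hx hy hx2 hy2 => ?_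
    · have hx := IsRooting.mem_leaves.1 hx
      simp only [Finset.mem_filter, Finset.mem_univ, true_and]
      exact ⟨hx.1, by omega⟩
    · refine Finset.card_le_one.1 hr2 x ?_ y ?_ <;>
        simp only [Finset.mem_filter, Finset.mem_univ, true_and]
      · exact ⟨hx, by omega⟩
      · exact ⟨hy, by omega⟩

end TreeOrder
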